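/- For every real a > 0, the function F_a : ℝ → ℝ defined by F_a(t) = −1 for t ≤ −1/2, F_a(t) = tanh(a·tan(πt)) for −1/2 < t < 1/2, and F_a(t) = 1 for t ≥ 1/2, is infinitely differentiable on ℝ. -/

import Mathlib

lemma tanh_aux (x : ℝ) : Real.tanh x = (1 - Real.exp (-(2 * x))) / (1 + Real.exp (-(2 * x))) := by
  have h1 := Real.exp_pos x
  have h2 := Real.exp_pos (-x)
  have h3 : Real.exp (-(2 * x)) = Real.exp (-x) * Real.exp (-x) := by
    rw [← Real.exp_add]; ring_nf
  have h4 : Real.exp x * Real.exp (-x) = 1 := by rw [← Real.exp_add]; simp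
  rw [Real.tanh_eq_sinh_div_cosh, Real.sinh_eq, Real.cosh_eq, h3]
  rw [div_div_div_cancel_right₀ (by norm_num), div_eq_div_iff (by positivity) (by positivity)]
  linear_combination (2 * Real.exp (-x)) * h4 - 0

lemma glue_aux (a : ℝ) (ha : 0 < a) (t : ℝ) (h0 : 0 < t) (h1 : t < 1) :
    (if t < (1 / 2 : ℝ) then Real.tanh (a * Real.tan (Real.pi * t)) else 1) =
      (1 - expNegInvGlue (Real.cos (Real.pi * t) / (2 * a * Real.sin (Real.pi * t)))) /
      (1 + expNegInvGlue (Real.cos (Real.pi * t) / (2 * a * Real.sin (Real.pi * t)))) := by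
  have hpi := Real.pi_pos
  have hs : 0 < Real.sin (Real.pi * t) :=
    Real.sin_pos_of_pos_of_lt_pi (by positivity) (by nlinarith)
  split_ifs with h
  · have hc : 0 < Real.cos (Real.pi * t) :=
      Real.cos_pos_of_mem_Ioo ⟨by nlinarith, by nlinarith⟩
    have hp : 0 < Real.cos (Real.pi * t) / (2 * a * Real.sin (Real.pi * t)) := by positivity
    rw [expNegInvGlue, if_neg (not_le.2 hp), tanh_aux, Real.tan_eq_sin_div_cos, inv_div]
    ring_nf
  · have hc : Real.cos (Real.pi * t) ≤ 0 :=
      Real.cos_nonpos_of_pi_div_two_le_of_le (by nlinarith) (by nlinarith)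
    rw [expNegInvGlue.zero_of_nonpos (div_nonpos_of_nonpos_of_nonneg hc (by positivity))]
    simp

lemma contDiffAt_aux (a : ℝ) (ha : 0 < a) (t : ℝ) (h0 : 0 < t) :
    ContDiffAt ℝ (⊤ : ℕ∞)
      (fun t : ℝ => if t < (1 / 2 : ℝ) then Real.tanh (a * Real.tan (Real.pi * t)) else 1) t := by
  rcases lt_or_ge t 1 with h1 | h1
  · have hs : 0 < Real.sin (Real.pi * t) :=
      Real.sin_pos_of_pos_of_lt_pi (by positivity) (by nlinarith [Real.pi_pos])
    have hq : ContDiffAt ℝ (⊤ : ℕ∞) (fun t : ℝ =>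
        Real.cos (Real.pi * t) / (2 * a * Real.sin (Real.pi * t))) t := by
      apply ContDiffAt.div
      · fun_prop
      · fun_prop
      · positivity
    have hE := (expNegInvGlue.contDiff (n := ⊤)).contDiffAt.comp t hq
    have hF := (contDiffAt_const (c := (1 : ℝ))).sub hE |>.div
      ((contDiffAt_const (c := (1 : ℝ))).add hE)
      (by
        have := expNegInvGlue.nonneg (Real.cos (Real.pi * t) / (2 * a * Real.sin (Real.pi * t)))
        simp only [Function.comp]
        positivity)
    refine hF.congr_of_eventuallyEq ?_
    filter_upwards [Ioo_mem_nhds h0 h1] with s hs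
    exact glue_aux a ha s hs.1 hs.2
  · refine (contDiffAt_const (c := (1 : ℝ))).congr_of_eventuallyEq ?_
    filter_upwards [Ioi_mem_nhds (show (1 / 2 : ℝ) < t by linarith)] with s hs
    exact if_neg (not_lt.2 (le_of_lt hs))

/-- for every `a > 0`, the function equal to `−1` for `t ≤ −1/2`,
to `tanh(a·tan(πt))` for `−1/2 < t < 1/2`, and to `1` for `t ≥ 1/2`, is
infinitely differentiable on `ℝ`. -/
theorem stmt5 (a : ℝ) (ha : 0 < a) :
    ContDiff ℝ (⊤ : ℕ∞) (fun t : ℝ =>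
      if t ≤ -(1 / 2 : ℝ) then (-1 : ℝ)
      else if t < (1 / 2 : ℝ) then Real.tanh (a * Real.tan (Real.pi * t))
      else 1) := by
  rw [contDiff_iff_contDiffAt]
  intro t
  rcases lt_trichotomy t 0 with h | h | h
  · have h2 := ((contDiffAt_aux a ha (-t) (by linarith)).comp t contDiffAt_id.neg).neg
    refine h2.congr_of_eventuallyEq ?_
    filter_upwards [Iio_mem_nhds h] with s hs
    have hs : s < 0 := hs
    by_cases h3 : s ≤ -(1 / 2 : ℝ)
    · have : ¬ (-s < (1 / 2 : ℝ)) := by linarith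
      simp only [Function.comp, Pi.neg_apply, id, if_pos h3, if_neg this]
    · have h4 : -s < (1 / 2 : ℝ) := by linarith
      have h5 : s < (1 / 2 : ℝ) := by linarith
      simp only [Function.comp, Pi.neg_apply, id, if_neg h3, if_pos h4, if_pos h5]
      simp [Real.tan_neg, Real.tanh_neg]
  · subst h
    have h1 : ContDiffAt ℝ (⊤ : ℕ∞) (fun t : ℝ =>
        Real.sinh (a * (Real.sin (Real.pi * t) / Real.cos (Real.pi * t))) /
        Real.cosh (a * (Real.sin (Real.pi * t) / Real.cos (Real.pi * t)))) 0 := by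
      have hq : ContDiffAt ℝ (⊤ : ℕ∞) (fun t : ℝ =>
          a * (Real.sin (Real.pi * t) / Real.cos (Real.pi * t))) 0 := by
        apply contDiffAt_const.mul
        apply ContDiffAt.div
        · fun_prop
        · fun_prop
        · simp
      exact (Real.contDiff_sinh.contDiffAt.comp (0 : ℝ) hq).div
        (Real.contDiff_cosh.contDiffAt.comp (0 : ℝ) hq) (Real.cosh_pos _).ne'
    refine h1.congr_of_eventuallyEq ?_
    filter_upwards [Ioo_mem_nhds (show -(1 / 2 : ℝ) < 0 by norm_num)
      (show (0 : ℝ) < 1 / 2 by norm_num)] with s hs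
    rw [if_neg (not_le.2 hs.1), if_pos hs.2, Real.tanh_eq_sinh_div_cosh, Real.tan_eq_sin_div_cos]
  · refine (contDiffAt_aux a ha t h).congr_of_eventuallyEq ?_
    filter_upwards [Ioi_mem_nhds h] with s hs
    have hs : 0 < s := hs
    rw [if_neg (by linarith)]
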